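/- Let f: A → B be a surjective homomorphism of MV-algebras, and suppose there exist an MV-algebra C and a surjective homomorphism g: C → B such that the projection π_C: A×_B C → C (where A×_B C := {(a,c) ∈ A×C : f(a)=g(c)}) restricts to a bijection Rad(A×_B C) → Rad(C). Then ker(f) ∩ Rad(A) = {0}, i.e. the restriction of f to Rad(A) is injective. Hence every central extension for the Galois structure of the semisimple reflection is a normal extension. -/

import Mathlib

namespace MVPaper

/-- An MV-algebra: a set with a binary `⊕`, a unary `¬`, and a constant `0`
satisfying the MV-algebra axioms. -/
class MV (α : Type*) where
  oplus : α → α → α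
  neg : α → α
  zero : α
  oplus_assoc : ∀ x y z : α, oplus x (oplus y z) = oplus (oplus x y) z
  oplus_comm : ∀ x y : α, oplus x y = oplus y x
  oplus_zero : ∀ x : α, oplus x zero = x
  neg_neg : ∀ x : α, neg (neg x) = x
  oplus_neg_zero : ∀ x : α, oplus x (neg zero) = neg zero
  lukasiewicz : ∀ x y : α,
    oplus (neg (oplus (neg x) y)) y = oplus (neg (oplus (neg y) x)) x

namespace MV

variable {α : Type*} [MV α]

/-- `1 := ¬0`. -/
def one : α := neg zero

/-- `x ⊙ y := ¬(¬x ⊕ ¬y)`. -/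
def odot (x y : α) : α := neg (oplus (neg x) (neg y))

/-- `x ⊖ y := ¬(¬x ⊕ y)`. -/
def ominus (x y : α) : α := neg (oplus (neg x) y)

/-- `d(x,y) := (x ⊖ y) ⊕ (y ⊖ x)`. -/
def dist (x y : α) : α := oplus (ominus x y) (ominus y x)

/-- The natural order: `x ≤ y` iff `¬x ⊕ y = 1`. -/
def le (x y : α) : Prop := oplus (neg x) y = one

/-- `x ∨ y := (x ⊖ y) ⊕ y`. -/
def sup (x y : α) : α := oplus (ominus x y) y

/-- `x ∧ y := x ⊙ (¬x ⊕ y)`. -/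
def inf (x y : α) : α := odot x (oplus (neg x) y)

/-- `n · a`, the `n`-fold sum `a ⊕ ⋯ ⊕ a`. -/
def nsmul : ℕ → α → α
  | 0, _ => zero
  | n + 1, a => oplus a (nsmul n a)

end MV

/-- Products of MV-algebras, with componentwise operations. -/
instance prodMV {α β : Type*} [MV α] [MV β] : MV (α × β) where
  oplus x y := (MV.oplus x.1 y.1, MV.oplus x.2 y.2)
  neg x := (MV.neg x.1, MV.neg x.2)
  zero := (MV.zero, MV.zero)
  oplus_assoc x y z :=
    congrArg₂ Prod.mk (MV.oplus_assoc _ _ _) (MV.oplus_assoc _ _ _)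
  oplus_comm x y :=
    congrArg₂ Prod.mk (MV.oplus_comm _ _) (MV.oplus_comm _ _)
  oplus_zero x := by
    obtain ⟨a, b⟩ := x
    exact congrArg₂ Prod.mk (MV.oplus_zero a) (MV.oplus_zero b)
  neg_neg x := by
    obtain ⟨a, b⟩ := x
    exact congrArg₂ Prod.mk (MV.neg_neg a) (MV.neg_neg b)
  oplus_neg_zero x :=
    congrArg₂ Prod.mk (MV.oplus_neg_zero _) (MV.oplus_neg_zero _)
  lukasiewicz x y :=
    congrArg₂ Prod.mk (MV.lukasiewicz _ _) (MV.lukasiewicz _ _)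

/-- A homomorphism of MV-algebras: a map preserving `⊕`, `¬` and `0`. -/
structure IsHom {α β : Type*} [MV α] [MV β] (f : α → β) : Prop where
  map_zero : f MV.zero = MV.zero
  map_oplus : ∀ x y : α, f (MV.oplus x y) = MV.oplus (f x) (f y)
  map_neg : ∀ x : α, f (MV.neg x) = MV.neg (f x)

/-- An ideal of an MV-algebra: contains `0`, closed under `⊕`, downward closed. -/
structure IsIdeal {α : Type*} [MV α] (I : Set α) : Prop where
  zero_mem : MV.zero ∈ I
  oplus_mem : ∀ ⦃x⦄, x ∈ I → ∀ ⦃y⦄, y ∈ I → MV.oplus x y ∈ I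
  lower_mem : ∀ ⦃x⦄, x ∈ I → ∀ ⦃y⦄, MV.le y x → y ∈ I

/-- The kernel of a homomorphism. -/
def ker {α β : Type*} [MV α] [MV β] (f : α → β) : Set α := {x | f x = MV.zero}

/-- The radical of an MV-algebra: `Rad(A) = {a | n·a ≤ ¬a for all n}`
(the intersection of all maximal proper ideals). -/
def Rad (α : Type*) [MV α] : Set α :=
  {a | ∀ n : ℕ, MV.le (MV.nsmul n a) (MV.neg a)}

/-- `P(A) := Rad(A) ∪ ¬Rad(A)`. -/
def PSet (α : Type*) [MV α] : Set α :=
  Rad α ∪ {x | MV.neg x ∈ Rad α}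

/-- An MV-algebra is trivial if `0 = 1`. -/
def IsTrivial (α : Type*) [MV α] : Prop := (MV.zero : α) = MV.one

/-- An MV-algebra is semisimple if its radical is trivial. -/
def Semisimple (α : Type*) [MV α] : Prop := Rad α = ({MV.zero} : Set α)

/-- An MV-algebra is perfect if `A = Rad(A) ∪ ¬Rad(A)`. -/
def Perfect (α : Type*) [MV α] : Prop := ∀ a : α, a ∈ PSet α

/-- `q : α → Q` realizes `Q` as the quotient of `α` by the ideal `I`,
i.e. by the congruence `x ∼ y ↔ d(x,y) ∈ I`. -/
structure IsQuotientBy {α Q : Type*} [MV α] [MV Q] (I : Set α) (q : α → Q) : Prop where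
  hom : IsHom q
  surj : Function.Surjective q
  eq_iff : ∀ x y : α, q x = q y ↔ MV.dist x y ∈ I

/-!
If `a ∈ ker f ∩ Rad A`, then `(a, 0)` and `(0, 0)` are two elements of `Rad (A ×_B C)` over
`0 ∈ C`, so injectivity of `π_C` forces `a = 0`. Injectivity of `f` on `Rad A` follows because the
radical is downward closed: if `f a = f b` with `a, b ∈ Rad A`, then `a ⊖ b ≤ a` and `b ⊖ a ≤ b`
both lie in `ker f ∩ Rad A`, hence vanish, which says `a ≤ b ≤ a`.

The radical of the subalgebra `A ×_B C` is `Rad (A × C) ∩ (A ×_B C)`, as the inequalities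
`n · a ≤ ¬a` mean the same in a subalgebra.
-/

namespace MV

variable {α β : Type*} [MV α] [MV β]

theorem neg_involutive : Function.Involutive (neg : α → α) := neg_neg

theorem neg_one : neg (one : α) = zero := neg_neg zero

theorem zero_oplus (x : α) : oplus zero x = x := by
  rw [oplus_comm, oplus_zero]

theorem oplus_one (x : α) : oplus x one = one := oplus_neg_zero x

theorem one_oplus (x : α) : oplus one x = one := by
  rw [oplus_comm, oplus_one]

theorem neg_oplus_self (x : α) : oplus (neg x) x = one := by
  have h := lukasiewicz one x
  rwa [neg_one, zero_oplus, oplus_one] at h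

theorem ominus_self (x : α) : ominus x x = zero := by
  rw [ominus, neg_oplus_self, neg_one]

theorem ominus_eq_zero_iff_le {x y : α} : ominus x y = zero ↔ le x y :=
  neg_involutive.eq_iff

theorem oplus_ominus_comm (x y : α) : oplus x (ominus y x) = oplus y (ominus x y) := by
  rw [oplus_comm x, oplus_comm y]
  exact lukasiewicz y x

theorem oplus_ominus_of_le {x y : α} (h : le x y) : oplus x (ominus y x) = y := by
  rw [oplus_ominus_comm, ominus_eq_zero_iff_le.2 h, oplus_zero]

theorem le_oplus_right (x z : α) : le x (oplus x z) := by
  rw [le, oplus_assoc, neg_oplus_self, one_oplus]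

theorem le_iff_exists_oplus {x y : α} : le x y ↔ ∃ z, oplus x z = y := by
  refine ⟨fun h => ⟨ominus y x, oplus_ominus_of_le h⟩, ?_⟩
  rintro ⟨z, rfl⟩
  exact le_oplus_right x z

/-- The natural order of an MV-algebra as a Mathlib order. It is scoped because on `α × β` it
agrees with Mathlib's componentwise order only propositionally. -/
scoped instance partialOrder : PartialOrder α where
  le := le
  le_refl := neg_oplus_self
  le_trans x y z hxy hyz := by
    obtain ⟨u, rfl⟩ := le_iff_exists_oplus.1 hxy
    obtain ⟨v, rfl⟩ := le_iff_exists_oplus.1 hyz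
    rw [← oplus_assoc]
    exact le_oplus_right x _
  le_antisymm x y hxy hyx := by
    rw [← oplus_ominus_of_le hxy, ominus_eq_zero_iff_le.2 hyx, oplus_zero]

theorem zero_le (x : α) : zero ≤ x := one_oplus x

theorem neg_antitone : Antitone (neg : α → α) := fun x y hxy => by
  change oplus (neg (neg y)) (neg x) = one
  rw [neg_neg, oplus_comm]
  exact hxy

theorem ominus_le_left (x y : α) : ominus x y ≤ x := by
  have h : neg (oplus (neg x) y) ≤ neg (neg x) := neg_antitone (le_oplus_right (neg x) y)
  rwa [neg_neg] at h

theorem oplus_right_mono (z : α) : Monotone (oplus z) := fun x y hxy => by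
  rw [← oplus_ominus_of_le hxy, oplus_assoc]
  exact le_oplus_right _ _

theorem oplus_le_oplus {x y z w : α} (hxy : x ≤ y) (hzw : z ≤ w) : oplus x z ≤ oplus y w :=
  calc
    oplus x z ≤ oplus x w := oplus_right_mono x hzw
    _ = oplus w x := oplus_comm x w
    _ ≤ oplus w y := oplus_right_mono w hxy
    _ = oplus y w := oplus_comm w y

theorem nsmul_mono (n : ℕ) : Monotone (nsmul n : α → α) := fun x y hxy => by
  induction n with
  | zero => exact le_rfl
  | succ n ih => exact oplus_le_oplus hxy ih

theorem nsmul_zero (n : ℕ) : nsmul n (zero : α) = zero := by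
  induction n with
  | zero => rfl
  | succ n ih => rw [nsmul, ih, oplus_zero]

theorem zero_mem_rad : (zero : α) ∈ Rad α := fun n => by
  rw [nsmul_zero]
  exact zero_le _

theorem isLowerSet_rad : IsLowerSet (Rad α) := fun x y hyx hx n =>
  calc
    nsmul n y ≤ nsmul n x := nsmul_mono n hyx
    _ ≤ neg x := hx n
    _ ≤ neg y := neg_antitone hyx

theorem le_prod_iff {p q : α × β} : le p q ↔ le p.1 q.1 ∧ le p.2 q.2 := Prod.ext_iff

theorem nsmul_prod (n : ℕ) (p : α × β) : nsmul n p = (nsmul n p.1, nsmul n p.2) := by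
  induction n with
  | zero => rfl
  | succ n ih =>
    rw [nsmul, ih]
    rfl

theorem rad_prod : Rad (α × β) = Rad α ×ˢ Rad β := by
  ext p
  simp only [Rad, Set.mem_prod, Set.mem_ofPred_eq, nsmul_prod, le_prod_iff, forall_and]
  rfl

end MV

namespace IsHom

open scoped MV

variable {α β : Type*} [MV α] [MV β] {f : α → β}

theorem map_ominus (hf : IsHom f) (x y : α) : f (MV.ominus x y) = MV.ominus (f x) (f y) := by
  rw [MV.ominus, hf.map_neg, hf.map_oplus, hf.map_neg, MV.ominus]

theorem ominus_mem_ker (hf : IsHom f) {x y : α} (h : f x = f y) : MV.ominus x y ∈ ker f := by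
  change f (MV.ominus x y) = MV.zero
  rw [hf.map_ominus, h, MV.ominus_self]

theorem injOn_iff_ker_inter_subset (hf : IsHom f) {I : Set α} (hI : IsLowerSet I) :
    Set.InjOn f I ↔ ker f ∩ I ⊆ {MV.zero} := by
  constructor
  · rintro hinj x ⟨hfx, hx⟩
    exact hinj hx (hI (MV.zero_le x) hx) (hfx.trans hf.map_zero.symm)
  · intro hker
    have le_of_map_eq {x y : α} (hx : x ∈ I) (h : f x = f y) : x ≤ y :=
      MV.ominus_eq_zero_iff_le.1 (hker ⟨hf.ominus_mem_ker h, hI (MV.ominus_le_left x y) hx⟩)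
    exact fun x hx y hy h => le_antisymm (le_of_map_eq hx h) (le_of_map_eq hy h.symm)

end IsHom

theorem ker_inter_rad_eq_singleton_zero {α β γ : Type*} [MV α] [MV β] [MV γ]
    {f : α → β} (hf : IsHom f) {g : γ → β} (hg : IsHom g)
    (hinj : Set.InjOn (Prod.snd : α × γ → γ)
      (Rad (α × γ) ∩ {p : α × γ | f p.1 = g p.2})) :
    ker f ∩ Rad α = ({MV.zero} : Set α) := by
  have mk_zero_mem {a : α} (ha : a ∈ ker f ∩ Rad α) :
      (a, MV.zero) ∈ Rad (α × γ) ∩ {p : α × γ | f p.1 = g p.2} :=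
    ⟨MV.rad_prod.ge ⟨ha.2, MV.zero_mem_rad⟩, ha.1.trans hg.map_zero.symm⟩
  have zero_mem : (MV.zero : α) ∈ ker f ∩ Rad α := ⟨hf.map_zero, MV.zero_mem_rad⟩
  exact Set.eq_singleton_iff_unique_mem.2 ⟨zero_mem, fun a ha =>
    congrArg Prod.fst (hinj (mk_zero_mem ha) (mk_zero_mem zero_mem) rfl)⟩

theorem central_is_normal_general {α β γ : Type*} [MV α] [MV β] [MV γ]
    {f : α → β} (hf : IsHom f) {g : γ → β} (hg : IsHom g)
    (hinj : Set.InjOn (Prod.snd : α × γ → γ)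
      (Rad (α × γ) ∩ {p : α × γ | f p.1 = g p.2})) :
    ker f ∩ Rad α = ({MV.zero} : Set α) ∧ Set.InjOn f (Rad α) :=
  have hker := ker_inter_rad_eq_singleton_zero hf hg hinj
  ⟨hker, (hf.injOn_iff_ker_inter_subset MV.isLowerSet_rad).2 hker.subset⟩

/-- Central extensions are normal: if `f : A → B` is a surjective homomorphism
and there are an MV-algebra `C` and a surjective homomorphism `g : C → B` such
that the projection `π_C : A ×_B C → C` restricts to a bijection
`Rad(A ×_B C) → Rad(C)`, then `ker f ∩ Rad A = {0}`, i.e. the restriction of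
`f` to `Rad(A)` is injective. -/
theorem central_is_normal {α β γ : Type*} [MV α] [MV β] [MV γ]
    {f : α → β} (hf : IsHom f) (hfs : Function.Surjective f)
    {g : γ → β} (hg : IsHom g) (hgs : Function.Surjective g)
    (hbij : Set.BijOn (Prod.snd : α × γ → γ)
      (Rad (α × γ) ∩ {p : α × γ | f p.1 = g p.2}) (Rad γ)) :
    ker f ∩ Rad α = ({MV.zero} : Set α) ∧ Set.InjOn f (Rad α) :=
  central_is_normal_general hf hg hbij.injOn

end MVPaper
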